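/- Let M ∈ Sp(2n) satisfy the brake symmetry N M N = M⁻¹, with n×n blocks M = [[D₁,D₂],[D₃,D₄]]. Let λ₁, λ₂ be eigenvalues of M (acting on ℂ^{2n} by complexification) with eigenvectors u₁ = (x₁,y₁), u₂ = (x₂,y₂), and let z₁, z₂ be the corresponding elements of Gr(M). If λ₁ ≠ conj(λ₂), or if λ₁ = λ₂ = 1, or if λ₁ = λ₂ = −1, then z₁ and z₂ are 𝔔-orthogonal: 𝔔(Gr(M), Λ_N; Λ_D)(z₁, z₂) = 0. -/

import Mathlib

open Matrix Module Submodule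

noncomputable section

/-- `ℂ^{2n}`, indexed by `Fin n ⊕ Fin n` (the two `n`-blocks). -/
abbrev CV (n : ℕ) := (Fin n ⊕ Fin n) → ℂ

/-- The standard Hermitian inner product `⟨x,y⟩ = ∑ xᵢ conj(yᵢ)`. -/
def herm {m : Type*} [Fintype m] (x y : m → ℂ) : ℂ :=
  ∑ i, x i * (starRingEnd ℂ) (y i)

/-- The standard complex symplectic form `ω(x,y) = ⟨Jx, y⟩` on `ℂ^{2n}`,
where `J = [[0,-I],[I,0]]`. -/
def symForm (n : ℕ) (x y : CV n) : ℂ :=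
  herm ((Matrix.J (Fin n) ℂ).mulVec x) y

/-- The symplectic form `-ω ⊕ ω` on `ℂ^{2n} ⊕ ℂ^{2n}`. -/
def symForm2 (n : ℕ) (p q : CV n × CV n) : ℂ :=
  - symForm n p.1 q.1 + symForm n p.2 q.2

/-- A Lagrangian subspace of a complex symplectic space: `ω` vanishes on it and
it has (half) dimension `m`. -/
def IsLagrangian {X : Type*} [AddCommGroup X] [Module ℂ X]
    (w : X → X → ℂ) (m : ℕ) (Λ : Submodule ℂ X) : Prop :=
  (∀ x ∈ Λ, ∀ y ∈ Λ, w x y = 0) ∧ Module.finrank ℂ Λ = m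

/-- `m⁺(𝔔(α,β;κ))`: the dimension of a maximal subspace of `α ∩ (β + κ)` on which
the form `𝔔(x₁,x₂) = ω(y₁,z₂)` (with `x_j = y_j + z_j`, `y_j ∈ β`, `z_j ∈ κ`) is
positive definite. -/
def posInd {X : Type*} [AddCommGroup X] [Module ℂ X]
    (w : X → X → ℂ) (α β κ : Submodule ℂ X) : ℕ :=
  sSup {k : ℕ | ∃ P : Submodule ℂ X, P ≤ α ⊓ (β ⊔ κ) ∧
    (∀ x ∈ P, x ≠ 0 → ∀ y ∈ β, ∀ z ∈ κ, x = y + z → 0 < (w y z).re) ∧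
    k = Module.finrank ℂ P}

/-- The triple index `i(α,β,κ) = m⁺(𝔔(α,β;κ)) + dim(α∩κ) − dim(α∩β∩κ)`. -/
def tripleIdx {X : Type*} [AddCommGroup X] [Module ℂ X]
    (w : X → X → ℂ) (α β κ : Submodule ℂ X) : ℕ :=
  posInd w α β κ + Module.finrank ℂ ↥(α ⊓ κ) - Module.finrank ℂ ↥(α ⊓ β ⊓ κ)

/-- `Λ^n_D = ℂ^n ⊕ {0}`, the Dirichlet Lagrangian (second block vanishes). -/
def LnD (n : ℕ) : Submodule ℂ (CV n) :=
  LinearMap.ker (LinearMap.funLeft ℂ ℂ (Sum.inr : Fin n → Fin n ⊕ Fin n))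

/-- `Λ^n_N = {0} ⊕ ℂ^n`, the Neumann Lagrangian (first block vanishes). -/
def LnN (n : ℕ) : Submodule ℂ (CV n) :=
  LinearMap.ker (LinearMap.funLeft ℂ ℂ (Sum.inl : Fin n → Fin n ⊕ Fin n))

/-- `Λ_D = Λ^n_D ⊕ Λ^n_D ⊂ ℂ^{4n}`. -/
def LD (n : ℕ) : Submodule ℂ (CV n × CV n) := (LnD n).prod (LnD n)

/-- `Λ_N = Λ^n_N ⊕ Λ^n_N ⊂ ℂ^{4n}`. -/
def LN (n : ℕ) : Submodule ℂ (CV n × CV n) := (LnN n).prod (LnN n)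

/-- Projection of `ℂ^{2n}` onto its `Λ^n_N` component (along `Λ^n_D`). -/
def projN (n : ℕ) (a : CV n) : CV n := Sum.elim 0 fun j => a (Sum.inr j)

/-- Projection of `ℂ^{2n}` onto its `Λ^n_D` component (along `Λ^n_N`). -/
def projD (n : ℕ) (a : CV n) : CV n := Sum.elim (fun j => a (Sum.inl j)) 0

/-- The Hermitian form `𝔔(Gr(M), Λ_N; Λ_D)` on `ℂ^{4n}`:
`𝔔(z₁,z₂) = (−ω⊕ω)(w₁, v₂)` where `z_j = w_j + v_j`, `w_j ∈ Λ_N`, `v_j ∈ Λ_D`. -/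
def QGr (n : ℕ) (z w : CV n × CV n) : ℂ :=
  symForm2 n (projN n z.1, projN n z.2) (projD n w.1, projD n w.2)

/-!
For a brake-symmetric symplectic `M`, the identity `M N M = N` makes the form `ω(N·, ·)`
`M`-selfadjoint: `ω(N M u, v) = ω(M N M u, M v) = ω(N u, M v)`. Since `(1 + N) / 2` projects onto
`Λ^n_N` and `M` preserves `ω`, the value of `𝔔` on graph elements is the change of `ω(N·, ·) / 2`
under `M`. On eigenvectors this gives `𝔔 = (λ₁ conj(λ₂) - 1) ω(N u, v) / 2`, while selfadjointness
gives `(λ₁ - conj(λ₂)) ω(N u, v) = 0`.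
-/

section Matrices

variable {m R S : Type*} [Fintype m] [DecidableEq m] [CommRing R] [CommRing S]

lemma isUnit_det_of_mul_mul_eq_self {A B M : Matrix m m R} (h : A * B * M = B)
    (hB : IsUnit B.det) : IsUnit M.det := by
  rw [← h, det_mul] at hB
  exact isUnit_of_mul_isUnit_right hB

lemma map_nonsing_inv (f : R →+* S) {M : Matrix m m R} (hM : IsUnit M.det) :
    M⁻¹.map f = (M.map f)⁻¹ := by
  refine (inv_eq_left_inv ?_).symm
  rw [← Matrix.map_mul, nonsing_inv_mul M hM, Matrix.map_one f f.map_zero f.map_one]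

/-- The matrix `N = diag(-I, I)`, the reflection of `R^{2l}` reversing the first block. The brake
symmetry of `M` is the relation `N M N = M⁻¹`. -/
def brakeReflection (l R : Type*) [DecidableEq l] [CommRing R] : Matrix (l ⊕ l) (l ⊕ l) R :=
  fromBlocks (-1) 0 0 1

variable {l : Type*} [DecidableEq l]

lemma brakeReflection_map (f : R →+* S) :
    (brakeReflection l R).map f = brakeReflection l S := by
  simp [brakeReflection, fromBlocks_map, Matrix.map_neg]

variable [Fintype l]

lemma brakeReflection_mul_self : brakeReflection l R * brakeReflection l R = 1 := by
  simp [brakeReflection, fromBlocks_multiply]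

lemma brakeReflection_mulVec_sumElim (x y : l → R) :
    brakeReflection l R *ᵥ Sum.elim x y = Sum.elim (-x) y := by
  simp [brakeReflection, fromBlocks_mulVec, neg_mulVec]

lemma mul_brakeReflection_mul_self {M : Matrix (l ⊕ l) (l ⊕ l) R} (hM : IsUnit M.det)
    (hbrake : brakeReflection l R * M * brakeReflection l R = M⁻¹) :
    M * brakeReflection l R * M = brakeReflection l R := by
  set N := brakeReflection l R
  calc M * N * M = N * N * (M * N * M) := by rw [brakeReflection_mul_self, Matrix.one_mul]
    _ = N * (N * M * N * M) := by simp only [Matrix.mul_assoc]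
    _ = N := by rw [hbrake, nonsing_inv_mul M hM, Matrix.mul_one]

lemma brakeReflection_mul_map_mul_brakeReflection (f : R →+* S) {M : Matrix (l ⊕ l) (l ⊕ l) R}
    (hM : IsUnit M.det) (hbrake : brakeReflection l R * M * brakeReflection l R = M⁻¹) :
    brakeReflection l S * M.map f * brakeReflection l S = (M.map f)⁻¹ := by
  rw [← map_nonsing_inv f hM, ← hbrake, Matrix.map_mul, Matrix.map_mul, brakeReflection_map]

lemma conjTranspose_map_ofReal_mul_J_mul {M : Matrix (l ⊕ l) (l ⊕ l) ℝ}
    (hM : Mᵀ * J l ℝ * M = J l ℝ) :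
    (M.map Complex.ofRealHom)ᴴ * J l ℂ * M.map Complex.ofRealHom = J l ℂ := by
  have hconj : (M.map Complex.ofRealHom)ᴴ = Mᵀ.map Complex.ofRealHom := by
    ext i j
    simp
  rw [hconj, ← map_J l Complex.ofRealHom, ← Matrix.map_mul, ← Matrix.map_mul, hM]

end Matrices

section HermitianForm

variable {m : Type*} [Fintype m]

lemma herm_eq_dotProduct_star (x y : m → ℂ) : herm x y = x ⬝ᵥ star y := rfl

lemma herm_mulVec_right {k : Type*} [Fintype k] (A : Matrix k m ℂ) (x : k → ℂ) (y : m → ℂ) :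
    herm x (A *ᵥ y) = herm (Aᴴ *ᵥ x) y := by
  rw [herm_eq_dotProduct_star, herm_eq_dotProduct_star, star_mulVec, dotProduct_comm,
    ← dotProduct_mulVec, dotProduct_comm]

end HermitianForm

section SymplecticForm

variable {n : ℕ}

lemma symForm_smul_left (c : ℂ) (u v : CV n) : symForm n (c • u) v = c * symForm n u v := by
  simp [symForm, herm_eq_dotProduct_star, mulVec_smul]

lemma symForm_smul_right (c : ℂ) (u v : CV n) :
    symForm n u (c • v) = starRingEnd ℂ c * symForm n u v := by
  simp [symForm, herm_eq_dotProduct_star]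

lemma symForm_sumElim (x y x' y' : Fin n → ℂ) :
    symForm n (Sum.elim x y) (Sum.elim x' y') = herm x y' - herm y x' := by
  have hJ : J (Fin n) ℂ *ᵥ Sum.elim x y = Sum.elim (-y) x := by
    simp [J, fromBlocks_mulVec, neg_mulVec]
  have hstar : star (Sum.elim x' y') = Sum.elim (star x') (star y') := by
    ext (i | i) <;> rfl
  rw [symForm, herm_eq_dotProduct_star, hJ, hstar, sumElim_dotProduct_sumElim, neg_dotProduct,
    neg_add_eq_sub, ← herm_eq_dotProduct_star, ← herm_eq_dotProduct_star]

lemma symForm_projN_projD (u v : CV n) :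
    symForm n (projN n u) (projD n v)
      = (symForm n u v + symForm n (brakeReflection (Fin n) ℂ *ᵥ u) v) / 2 := by
  rw [← Sum.elim_comp_inl_inr u, ← Sum.elim_comp_inl_inr v, brakeReflection_mulVec_sumElim,
    symForm_sumElim, symForm_sumElim, projN, projD, symForm_sumElim]
  simp only [Function.comp_def, herm_eq_dotProduct_star, Sum.elim_inl, Sum.elim_inr,
    zero_dotProduct, neg_dotProduct]
  ring

variable {M : Matrix (Fin n ⊕ Fin n) (Fin n ⊕ Fin n) ℂ}

lemma symForm_mulVec_mulVec (hM : Mᴴ * J (Fin n) ℂ * M = J (Fin n) ℂ) (u v : CV n) :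
    symForm n (M *ᵥ u) (M *ᵥ v) = symForm n u v := by
  rw [symForm, symForm, herm_mulVec_right, mulVec_mulVec, mulVec_mulVec, hM]

lemma symForm_brakeReflection_mulVec_left (hM : Mᴴ * J (Fin n) ℂ * M = J (Fin n) ℂ)
    (hMNM : M * brakeReflection (Fin n) ℂ * M = brakeReflection (Fin n) ℂ) (u v : CV n) :
    symForm n (brakeReflection (Fin n) ℂ *ᵥ (M *ᵥ u)) v
      = symForm n (brakeReflection (Fin n) ℂ *ᵥ u) (M *ᵥ v) := by
  rw [← symForm_mulVec_mulVec hM, mulVec_mulVec, mulVec_mulVec, hMNM]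

lemma QGr_graph (hM : Mᴴ * J (Fin n) ℂ * M = J (Fin n) ℂ) (u v : CV n) :
    QGr n (u, M *ᵥ u) (v, M *ᵥ v)
      = (symForm n (brakeReflection (Fin n) ℂ *ᵥ (M *ᵥ u)) (M *ᵥ v)
          - symForm n (brakeReflection (Fin n) ℂ *ᵥ u) v) / 2 := by
  simp only [QGr, symForm2, symForm_projN_projD, symForm_mulVec_mulVec hM]
  ring

end SymplecticForm

theorem QGr_orthogonal_of_eigvec_general (n : ℕ)
    (M : Matrix (Fin n ⊕ Fin n) (Fin n ⊕ Fin n) ℂ)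
    (hM : Mᴴ * J (Fin n) ℂ * M = J (Fin n) ℂ)
    (hbrake : brakeReflection (Fin n) ℂ * M * brakeReflection (Fin n) ℂ = M⁻¹)
    (lam₁ lam₂ : ℂ) (u v : CV n) (hu : M *ᵥ u = lam₁ • u) (hv : M *ᵥ v = lam₂ • v)
    (hcase : lam₁ ≠ starRingEnd ℂ lam₂ ∨ (lam₁ = 1 ∧ lam₂ = 1) ∨ (lam₁ = -1 ∧ lam₂ = -1)) :
    QGr n (u, M *ᵥ u) (v, M *ᵥ v) = 0 := by
  have hdet : IsUnit M.det := isUnit_det_of_mul_mul_eq_self hM (isUnit_det_J (Fin n) ℂ)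
  have hMNM := mul_brakeReflection_mul_self hdet hbrake
  set b := symForm n (brakeReflection (Fin n) ℂ *ᵥ u) v
  have hselfAdjoint : lam₁ * b = starRingEnd ℂ lam₂ * b := by
    simpa only [hu, hv, mulVec_smul, symForm_smul_left, symForm_smul_right]
      using symForm_brakeReflection_mulVec_left hM hMNM u v
  have hQ : QGr n (u, M *ᵥ u) (v, M *ᵥ v) = (lam₁ * (starRingEnd ℂ lam₂ * b) - b) / 2 := by
    rw [QGr_graph hM, hu, hv, mulVec_smul, symForm_smul_left, symForm_smul_right]
  rw [hQ]
  rcases hcase with hne | ⟨rfl, rfl⟩ | ⟨rfl, rfl⟩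
  · have hb_zero : b = 0 := (mul_eq_mul_right_iff.mp hselfAdjoint).resolve_left hne
    simp [hb_zero]
  · simp
  · simp

/-- For a brake-symmetric symplectic matrix `M` (`N M N = M⁻¹`), if `λ₁ ≠ conj(λ₂)`,
or `λ₁ = λ₂ = 1`, or `λ₁ = λ₂ = −1`, then the graph elements `z₁, z₂`
corresponding to the eigenvectors are `𝔔`-orthogonal. -/
theorem QGr_orthogonal_of_eigvec (n : ℕ)
    (M : Matrix (Fin n ⊕ Fin n) (Fin n ⊕ Fin n) ℝ)
    (hM : Mᵀ * Matrix.J (Fin n) ℝ * M = Matrix.J (Fin n) ℝ)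
    (hbrake : fromBlocks (-1 : Matrix (Fin n) (Fin n) ℝ) 0 0 1 * M
        * fromBlocks (-1) 0 0 1 = M⁻¹)
    (lam₁ lam₂ : ℂ) (x₁ y₁ x₂ y₂ : Fin n → ℂ)
    (hne₁ : Sum.elim x₁ y₁ ≠ 0) (hne₂ : Sum.elim x₂ y₂ ≠ 0)
    (h₁ : (M.map Complex.ofReal).mulVec (Sum.elim x₁ y₁) = lam₁ • Sum.elim x₁ y₁)
    (h₂ : (M.map Complex.ofReal).mulVec (Sum.elim x₂ y₂) = lam₂ • Sum.elim x₂ y₂)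
    (hcase : lam₁ ≠ (starRingEnd ℂ) lam₂ ∨ (lam₁ = 1 ∧ lam₂ = 1)
      ∨ (lam₁ = -1 ∧ lam₂ = -1)) :
    QGr n (Sum.elim x₁ y₁, (M.map Complex.ofReal).mulVec (Sum.elim x₁ y₁))
          (Sum.elim x₂ y₂, (M.map Complex.ofReal).mulVec (Sum.elim x₂ y₂)) = 0 :=
  QGr_orthogonal_of_eigvec_general n _ (conjTranspose_map_ofReal_mul_J_mul hM)
    (brakeReflection_mul_map_mul_brakeReflection Complex.ofRealHom
      (SymplecticGroup.symplectic_det (SymplecticGroup.mem_iff'.mpr hM)) hbrake)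
    lam₁ lam₂ _ _ h₁ h₂ hcase
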